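/- Let α be a type and let A, B be lists over α, both of length ℓ. Then for every k ≥ 1, the length of S_{A,B}(a(k)) satisfies |S(a(k))| = ℓ · d(k), where d is Stern's diatomic sequence. (In particular, for ℓ = 2 this is |S(a(k))| = 2 d_k.) -/

import Mathlib

/-- Stern's diatomic sequence. -/
def stern : ℕ → ℕ
  | 0 => 0
  | 1 => 1
  | n + 2 =>
    if (n + 2) % 2 = 0 then stern ((n + 2) / 2)
    else stern ((n + 2) / 2) + stern ((n + 2) / 2 + 1)
decreasing_by all_goals omega

/-- OEIS A003602: a(1)=1, a(2n)=a(n), a(2n+1)=n+1. (a(0)=0 as junk value.) -/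
def aseq : ℕ → ℕ
  | 0 => 0
  | 1 => 1
  | n + 2 =>
    if (n + 2) % 2 = 0 then aseq ((n + 2) / 2)
    else (n + 2) / 2 + 1
decreasing_by all_goals omega

-- the modified sequence `a*`: zero at powers of two.
open Classical in
noncomputable def aStar (j : ℕ) : ℕ :=
  if ∃ k, j = 2 ^ k then 0 else aseq j

theorem aseq_le (n : ℕ) : aseq n ≤ n := by
  induction n using Nat.strong_induction_on with
  | _ n ih =>
    match n with
    | 0 => simp [aseq]
    | 1 => simp [aseq]
    | m + 2 =>
      rw [aseq]
      split
      · exact le_trans (ih ((m + 2) / 2) (by omega)) (by omega)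
      · omega

theorem aStar_le (j : ℕ) : aStar j ≤ j := by
  unfold aStar
  split
  · omega
  · exact aseq_le j

/-- The Markov-type sequence `S_{A,B}(n)`. -/
noncomputable def mseq {α : Type*} (A B : List α) : ℕ → List α
  | 0 => A
  | 1 => B
  | 2 => A ++ B
  | n + 3 =>
    if (n + 3) % 2 = 0 then
      mseq A B ((n + 3) / 2) ++ mseq A B (aseq ((n + 3) / 2))
    else
      mseq A B (aStar ((n + 4) / 2 - 1)) ++ mseq A B ((n + 4) / 2)
decreasing_by
  all_goals first
    | omega
    | exact lt_of_le_of_lt (aseq_le _) (by omega)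
    | exact lt_of_le_of_lt (aStar_le _) (by omega)

/-!
Since `a(2n) = a(n)` and `a(2n+1) = n+1`, the two recurrences for `S` merge into the single identity
`S(n+1) = S(a*(n)) ⊕ S(a(n+1))` for `n ≥ 1`. The sequences `a` and `a*` differ only at powers of
two, where they select `B` and `A` respectively, so for `|A| = |B|` the numbers `|S(a(k))|` satisfy
Stern's recurrence, which determines them from their value at `k = 1`.
-/

theorem stern_two_mul (n : ℕ) : stern (2 * n) = stern n := by
  cases n with
  | zero => rfl
  | succ m => rw [Nat.mul_succ, stern, if_pos (by omega), show (2 * m + 2) / 2 = m + 1 by omega]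

theorem stern_two_mul_add_one (n : ℕ) : stern (2 * n + 1) = stern n + stern (n + 1) := by
  cases n with
  | zero => simp [stern]
  | succ m =>
    rw [show 2 * (m + 1) + 1 = 2 * m + 1 + 2 by ring, stern, if_neg (by omega),
      show (2 * m + 1 + 2) / 2 = m + 1 by omega]

theorem eq_stern_nsmul_of_recurrence {M : Type*} [AddMonoid M] {f : ℕ → M}
    (f_even : ∀ n ≠ 0, f (2 * n) = f n) (f_odd : ∀ n ≠ 0, f (2 * n + 1) = f n + f (n + 1))
    {k : ℕ} (hk : k ≠ 0) : f k = stern k • f 1 := by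
  induction k using Nat.evenOddStrongRec with
  | h_even n ih =>
    have hn : n ≠ 0 := by omega
    rw [f_even n hn, stern_two_mul, ih n (by omega) hn]
  | h_odd n ih =>
    rcases eq_or_ne n 0 with rfl | hn
    · simp [stern]
    · rw [f_odd n hn, stern_two_mul_add_one, add_nsmul, ih n (by omega) hn,
        ih (n + 1) (by omega) n.succ_ne_zero]

theorem aseq_two_mul (n : ℕ) : aseq (2 * n) = aseq n := by
  cases n with
  | zero => rfl
  | succ m => rw [Nat.mul_succ, aseq, if_pos (by omega), show (2 * m + 2) / 2 = m + 1 by omega]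

theorem aseq_two_mul_add_one (n : ℕ) : aseq (2 * n + 1) = n + 1 := by
  cases n with
  | zero => simp [aseq]
  | succ m =>
    rw [show 2 * (m + 1) + 1 = 2 * m + 1 + 2 by ring, aseq, if_neg (by omega),
      show (2 * m + 1 + 2) / 2 = m + 1 by omega]

theorem aseq_two_pow (k : ℕ) : aseq (2 ^ k) = 1 := by
  induction k with
  | zero => simp [aseq]
  | succ k ih => rw [pow_succ', aseq_two_mul, ih]

theorem aStar_two_pow (k : ℕ) : aStar (2 ^ k) = 0 := if_pos ⟨k, rfl⟩

theorem aStar_of_ne_two_pow {n : ℕ} (hn : ∀ k, n ≠ 2 ^ k) : aStar n = aseq n :=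
  if_neg (not_exists.mpr hn)

theorem aStar_two_mul (n : ℕ) : aStar (2 * n) = aStar n := by
  by_cases hn : ∃ k, n = 2 ^ k
  · obtain ⟨k, rfl⟩ := hn
    rw [← pow_succ', aStar_two_pow, aStar_two_pow]
  · have two_mul_ne (k : ℕ) : 2 * n ≠ 2 ^ k := by
      cases k with
      | zero => omega
      | succ k => exact fun h => hn ⟨k, by rw [pow_succ'] at h; omega⟩
    rw [aStar_of_ne_two_pow two_mul_ne, aStar_of_ne_two_pow (not_exists.mp hn), aseq_two_mul]

theorem aStar_two_mul_add_one {n : ℕ} (hn : n ≠ 0) : aStar (2 * n + 1) = n + 1 := by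
  have ne_two_pow (k : ℕ) : 2 * n + 1 ≠ 2 ^ k := by
    cases k with
    | zero => omega
    | succ k => rw [pow_succ']; omega
  rw [aStar_of_ne_two_pow ne_two_pow, aseq_two_mul_add_one]

section MarkovSequence

variable {α : Type*} (A B : List α)

theorem mseq_two_mul {j : ℕ} (hj : 2 ≤ j) :
    mseq A B (2 * j) = mseq A B j ++ mseq A B (aseq j) := by
  obtain ⟨i, rfl⟩ := Nat.exists_eq_add_of_le' hj
  rw [show 2 * (i + 2) = 2 * i + 1 + 3 by ring, mseq, if_pos (by omega),
    show (2 * i + 1 + 3) / 2 = i + 2 by omega]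

theorem mseq_two_mul_add_one {j : ℕ} (hj : j ≠ 0) :
    mseq A B (2 * j + 1) = mseq A B (aStar j) ++ mseq A B (j + 1) := by
  obtain ⟨i, rfl⟩ := Nat.exists_eq_succ_of_ne_zero hj
  rw [show 2 * i.succ + 1 = 2 * i + 3 by omega, mseq, if_neg (by omega),
    show (2 * i + 4) / 2 = i.succ + 1 by omega, Nat.add_sub_cancel]

theorem mseq_succ {n : ℕ} (hn : n ≠ 0) :
    mseq A B (n + 1) = mseq A B (aStar n) ++ mseq A B (aseq (n + 1)) := by
  obtain ⟨j, rfl | rfl⟩ := n.even_or_odd'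
  · rw [aStar_two_mul, aseq_two_mul_add_one, mseq_two_mul_add_one A B (by omega)]
  · rw [show 2 * j + 1 + 1 = 2 * (j + 1) by ring, aseq_two_mul]
    rcases eq_or_ne j 0 with rfl | hj
    · have aStar_one : aStar 1 = 0 := aStar_two_pow 0
      simp [aStar_one, aseq, mseq]
    · rw [aStar_two_mul_add_one hj, mseq_two_mul A B (by omega)]

variable {A B}

theorem length_mseq_aStar (hAB : A.length = B.length) (n : ℕ) :
    (mseq A B (aStar n)).length = (mseq A B (aseq n)).length := by
  by_cases hn : ∃ k, n = 2 ^ k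
  · obtain ⟨k, rfl⟩ := hn
    simpa [aStar_two_pow, aseq_two_pow, mseq] using hAB
  · rw [aStar_of_ne_two_pow (not_exists.mp hn)]

theorem length_mseq_aseq_two_mul_add_one (hAB : A.length = B.length) {n : ℕ} (hn : n ≠ 0) :
    (mseq A B (aseq (2 * n + 1))).length =
      (mseq A B (aseq n)).length + (mseq A B (aseq (n + 1))).length := by
  rw [aseq_two_mul_add_one, mseq_succ A B hn, List.length_append, length_mseq_aStar hAB]

end MarkovSequence

/-- if `A` and `B` both have length `ℓ`, then for every `k ≥ 1`,
`|S(a(k))| = ℓ · d(k)`. -/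
theorem stmt6 {α : Type*} (A B : List α) (ℓ : ℕ) (hA : A.length = ℓ) (hB : B.length = ℓ)
    (k : ℕ) (hk : 1 ≤ k) :
    (mseq A B (aseq k)).length = ℓ * stern k := by
  have length_eq := eq_stern_nsmul_of_recurrence (f := fun k => (mseq A B (aseq k)).length)
    (fun n _ => by rw [aseq_two_mul])
    (fun _ => length_mseq_aseq_two_mul_add_one (hA.trans hB.symm)) (Nat.one_le_iff_ne_zero.mp hk)
  have length_one : (mseq A B (aseq 1)).length = ℓ := by simp [aseq, mseq, hB]
  rw [length_eq, length_one, smul_eq_mul, mul_comm]
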